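/- arXiv:0804.1945 — 2 statements merged into one kernel-verified Lean document; each statement's English description precedes it below -/
import Mathlib

section
/- Let R be an Hermite ring. Then every k×m matrix F over R that is right invertible (i.e., FG = I_k for some m×k matrix G over R) can be complemented: there exists an invertible m×m matrix F_0 over R whose first k rows form F. Dually, every m×k left invertible matrix over R can be complemented to an invertible m×m matrix over R whose first k columns form it. -/
/-- A commutative unital ring `R` is an **Hermite ring** if every unimodular
row `(a_0, …, a_m)` (i.e. `∑ i, a i * b i = 1` for some `b`) can be
complemented to an invertible square matrix over `R` whose first row it is. -/
def IsHermiteRing (R : Type*) [CommRing R] : Prop :=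
  ∀ (m : ℕ) (a b : Fin (m + 1) → R), (∑ i, a i * b i) = 1 →
    ∃ M : Matrix (Fin (m + 1)) (Fin (m + 1)) R, IsUnit M ∧ ∀ j, M 0 j = a j

/-!
Induct on the number of rows. The first row of a right invertible matrix `F` is unimodular, hence
the first row of some invertible `M`, and `F * M⁻¹` has the block form `[[1, 0], [c, K]]`. Then `K`
is again right invertible; if the first rows of an invertible `P` form `K`, and `c` is padded by
zeros to `c'`, then the first rows of `[[1, 0], [c', P]] * M` form `F`. The statement on columns is
the transpose of the one on rows.
-/

open Matrix

/-- A matrix `F` is complemented along `e` if it consists of the rows `e i` of some invertible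
matrix; taking `e = Fin.castLE _` says that `F` forms the first rows of that matrix. -/
def IsRowComplementable {ι n R : Type*} [Fintype n] [DecidableEq n] [CommRing R]
    (e : ι → n) (F : Matrix ι n R) : Prop :=
  ∃ F₀ : Matrix n n R, IsUnit F₀ ∧ ∀ i j, F₀ (e i) j = F i j

theorem submatrix_succ_mul_submatrix_succ_eq_one {R : Type*} [NonAssocSemiring R] {k n : ℕ}
    {F : Matrix (Fin (k + 1)) (Fin (n + 1)) R} {G : Matrix (Fin (n + 1)) (Fin (k + 1)) R}
    (hFG : F * G = 1) (hF : F 0 = Pi.single 0 1) :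
    F.submatrix Fin.succ Fin.succ * G.submatrix Fin.succ Fin.succ = 1 := by
  have hG : G 0 = (1 : Matrix (Fin (k + 1)) (Fin (k + 1)) R) 0 := by
    rw [← hFG, mul_apply_eq_vecMul, hF, single_one_vecMul, row]
  ext i j
  have hij : (F * G) i.succ j.succ = (1 : Matrix (Fin k) (Fin k) R) i j := by
    simp [hFG, one_apply]
  have hG₀ : G 0 j.succ = 0 := by
    rw [hG, one_apply_ne (Fin.succ_ne_zero j).symm]
  rwa [mul_apply, Fin.sum_univ_succ, hG₀, mul_zero, zero_add] at hij

section CommRing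

variable {R : Type*} [CommRing R]

theorem det_eq_det_submatrix_succ_of_row_zero {n : ℕ} {A : Matrix (Fin (n + 1)) (Fin (n + 1)) R}
    (hA : A 0 = Pi.single 0 1) : A.det = (A.submatrix Fin.succ Fin.succ).det := by
  simp [det_succ_row_zero A, hA, Fin.sum_univ_succ]

namespace IsRowComplementable

theorem mul_isUnit {ι n : Type*} [Fintype n] [DecidableEq n] {e : ι → n} {F : Matrix ι n R}
    (hF : IsRowComplementable e F) {M : Matrix n n R} (hM : IsUnit M) :
    IsRowComplementable e (F * M) := by
  obtain ⟨F₀, hF₀, hrows⟩ := hF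
  exact ⟨F₀ * M, hF₀.mul hM, fun i j => by simp only [mul_apply, hrows]⟩

theorem of_submatrix_succ {k n : ℕ} {e : Fin k → Fin n} (he : Function.Injective e)
    {F : Matrix (Fin (k + 1)) (Fin (n + 1)) R} (hrow : F 0 = Pi.single 0 1)
    (hF : IsRowComplementable e (F.submatrix Fin.succ Fin.succ)) :
    IsRowComplementable (Fin.cons 0 (Fin.succ ∘ e) : Fin (k + 1) → Fin (n + 1)) F := by
  obtain ⟨P, hP, hrows⟩ := hF
  let c : Fin n → R := Function.extend e (fun i => F i.succ 0) 0
  let H : Matrix (Fin (n + 1)) (Fin (n + 1)) R :=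
    of (Fin.cons (Pi.single 0 1) fun i => Fin.cons (c i) (P i))
  have hH : IsUnit H := by
    rw [isUnit_iff_isUnit_det] at hP ⊢
    rwa [det_eq_det_submatrix_succ_of_row_zero (A := H) rfl]
  refine ⟨H, hH, fun i j => ?_⟩
  cases i using Fin.cases with
  | zero => exact congrFun hrow.symm j
  | succ i =>
    cases j using Fin.cases with
    | zero => exact he.extend_apply (fun i => F i.succ 0) 0 i
    | succ j => exact hrows i j

end IsRowComplementable

namespace IsHermiteRing

theorem exists_eq_mul_isUnit (hR : IsHermiteRing R) {ι : Type*} {n : ℕ}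
    (F : Matrix ι (Fin (n + 1)) R) (i : ι) {b : Fin (n + 1) → R} (hb : F i ⬝ᵥ b = 1) :
    ∃ (K : Matrix ι (Fin (n + 1)) R) (M : Matrix (Fin (n + 1)) (Fin (n + 1)) R),
      IsUnit M ∧ F = K * M ∧ K i = Pi.single 0 1 := by
  obtain ⟨M, hM, hrow⟩ := hR n (F i) b hb
  have hdet : IsUnit M.det := (isUnit_iff_isUnit_det M).mp hM
  refine ⟨F * M⁻¹, M, hM, (nonsing_inv_mul_cancel_right M F hdet).symm, ?_⟩
  calc (F * M⁻¹) i = F i ᵥ* M⁻¹ := mul_apply_eq_vecMul F M⁻¹ i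
    _ = M 0 ᵥ* M⁻¹ := by rw [funext hrow]
    _ = (M * M⁻¹) 0 := (mul_apply_eq_vecMul M M⁻¹ 0).symm
    _ = (1 : Matrix (Fin (n + 1)) (Fin (n + 1)) R) 0 := by rw [mul_nonsing_inv M hdet]
    _ = Pi.single 0 1 := funext fun _ => one_eq_pi_single

theorem isRowComplementable (hR : IsHermiteRing R) {k m : ℕ} (hkm : k ≤ m)
    {F : Matrix (Fin k) (Fin m) R} {G : Matrix (Fin m) (Fin k) R} (hFG : F * G = 1) :
    IsRowComplementable (Fin.castLE hkm) F := by
  induction k generalizing m with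
  | zero => exact ⟨1, isUnit_one, fun i => i.elim0⟩
  | succ k ih =>
    obtain ⟨n, rfl⟩ := Nat.exists_eq_add_of_le' (Nat.one_le_of_lt hkm)
    have hkn : k ≤ n := Nat.le_of_succ_le_succ hkm
    have hunimodular : F 0 ⬝ᵥ G.col 0 = 1 := congrFun₂ hFG 0 0
    obtain ⟨K, M, hM, rfl, hK⟩ := hR.exists_eq_mul_isUnit F 0 hunimodular
    rw [Matrix.mul_assoc] at hFG
    have hminor : IsRowComplementable (Fin.castLE hkn) (K.submatrix Fin.succ Fin.succ) :=
      ih hkn (submatrix_succ_mul_submatrix_succ_eq_one hFG hK)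
    have hcast : Fin.castLE hkm = Fin.cons 0 (Fin.succ ∘ Fin.castLE hkn) :=
      funext (Fin.cases rfl fun _ => rfl)
    rw [hcast]
    exact (hminor.of_submatrix_succ (Fin.castLE_injective hkn) hK).mul_isUnit hM

end IsHermiteRing

end CommRing

/-- **Lemma 2.1.**  If `R` is an Hermite ring, then every right invertible
`k × m` matrix over `R` can be complemented to an invertible `m × m` matrix
over `R` whose first `k` rows form it; dually, every left invertible `m × k`
matrix can be complemented to an invertible `m × m` matrix whose first `k`
columns form it. -/
theorem hermite_complement_matrix (R : Type*) [CommRing R]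
    (hR : IsHermiteRing R) :
    (∀ (k m : ℕ) (hkm : k ≤ m) (F : Matrix (Fin k) (Fin m) R)
        (G : Matrix (Fin m) (Fin k) R), F * G = 1 →
      ∃ F₀ : Matrix (Fin m) (Fin m) R, IsUnit F₀ ∧
        ∀ (i : Fin k) (j : Fin m), F₀ (Fin.castLE hkm i) j = F i j) ∧
    (∀ (k m : ℕ) (hkm : k ≤ m) (F : Matrix (Fin m) (Fin k) R)
        (G : Matrix (Fin k) (Fin m) R), G * F = 1 →
      ∃ F₀ : Matrix (Fin m) (Fin m) R, IsUnit F₀ ∧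
        ∀ (i : Fin m) (j : Fin k), F₀ i (Fin.castLE hkm j) = F i j) := by
  refine ⟨fun k m hkm F G hFG => hR.isRowComplementable hkm hFG, fun k m hkm F G hGF => ?_⟩
  have hFG : Fᵀ * Gᵀ = 1 := by rw [← transpose_mul, hGF, transpose_one]
  obtain ⟨P, hP, hrows⟩ := hR.isRowComplementable hkm hFG
  exact ⟨Pᵀ, (isUnit_transpose P).mpr hP, fun i j => hrows j i⟩
end

section
/- Let R be an Hermite ring without divisors of zero, with field of fractions F. If G is a (rectangular) matrix with entries in F that admits a left coprime factorization over R, then G also admits a right coprime factorization over R; and conversely, if G admits a right coprime factorization over R then it admits a left coprime factorization over R. -/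
/-- `G = Q⁻¹ P` is a left coprime factorization of the matrix `G` over the
field of fractions of `R`: `P, Q` are matrices over `R`, `Q` is square with
nonzero determinant, and `P, Q` are left coprime (`P Y₁ + Q Y₂ = 1`). -/
def HasLeftCoprimeFactorization (R : Type*) [CommRing R] [IsDomain R] {m n : ℕ}
    (G : Matrix (Fin m) (Fin n) (FractionRing R)) : Prop :=
  ∃ (P : Matrix (Fin m) (Fin n) R) (Q : Matrix (Fin m) (Fin m) R),
    Q.det ≠ 0 ∧
    (∃ (Y₁ : Matrix (Fin n) (Fin m) R) (Y₂ : Matrix (Fin m) (Fin m) R),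
      P * Y₁ + Q * Y₂ = 1) ∧
    (Q.map (algebraMap R (FractionRing R))) * G = P.map (algebraMap R (FractionRing R))

/-- `G = N M⁻¹` is a right coprime factorization of the matrix `G` over the
field of fractions of `R`: `N, M` are matrices over `R`, `M` is square with
nonzero determinant, and `N, M` are right coprime (`X₁ N + X₂ M = 1`). -/
def HasRightCoprimeFactorization (R : Type*) [CommRing R] [IsDomain R] {m n : ℕ}
    (G : Matrix (Fin m) (Fin n) (FractionRing R)) : Prop :=
  ∃ (N : Matrix (Fin m) (Fin n) R) (M : Matrix (Fin n) (Fin n) R),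
    M.det ≠ 0 ∧
    (∃ (X₁ : Matrix (Fin n) (Fin m) R) (X₂ : Matrix (Fin n) (Fin n) R),
      X₁ * N + X₂ * M = 1) ∧
    G * (M.map (algebraMap R (FractionRing R))) = N.map (algebraMap R (FractionRing R))

/-! A left coprime factorization `G = Q⁻¹ P` says that the block row `[Q, -P]` is right invertible,
so its kernel is a stably free `R`-module of rank `n`. Over a Hermite ring finitely generated stably
free modules are free: completing a unimodular row moves a surjective functional on `Rⁿ⁺¹` to a
coordinate, which cancels one copy of `R` at a time. A basis of the kernel, written as columns, is
the block column of `N` and `M`, and a retraction onto the kernel provides `[X₁, X₂]`. The converse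
follows by transposition. -/

section Cancellation

open Function Module

theorem nonempty_linearEquiv_of_fst_comp_eq {R E K L : Type*} [Semiring R]
    [AddCommMonoid E] [AddCommMonoid K] [AddCommMonoid L] [Module R E] [Module R K] [Module R L]
    (e : (E × K) ≃ₗ[R] E × L) (he : .fst R E L ∘ₗ e.toLinearMap = .fst R E K) :
    Nonempty (K ≃ₗ[R] L) := by
  have fst_apply (x : E × K) : (e x).1 = x.1 := LinearMap.congr_fun he x
  have fst_symm_apply (y : E × L) : (e.symm y).1 = y.1 := by rw [← fst_apply, e.apply_symm_apply]
  have apply_inr (k : K) : ((0 : E), (e (0, k)).2) = e (0, k) :=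
    Prod.ext (fst_apply (0, k)).symm rfl
  have symm_apply_inr (l : L) : ((0 : E), (e.symm (0, l)).2) = e.symm (0, l) :=
    Prod.ext (fst_symm_apply (0, l)).symm rfl
  exact ⟨.ofLinearMap (.snd R E L ∘ₗ e.toLinearMap ∘ₗ .inr R E K)
    (.snd R E K ∘ₗ e.symm.toLinearMap ∘ₗ .inr R E L)
    (by ext l; simp [symm_apply_inr]) (by ext k; simp [apply_inr])⟩

namespace IsHermiteRing

theorem exists_linearEquiv_proj_zero_comp_eq {R : Type*} [CommRing R] (hR : IsHermiteRing R)
    {n : ℕ} {f : (Fin (n + 1) → R) →ₗ[R] R} (hf : Surjective f) :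
    ∃ φ : (Fin (n + 1) → R) ≃ₗ[R] (Fin (n + 1) → R), .proj 0 ∘ₗ φ.toLinearMap = f := by
  obtain ⟨b, hb⟩ := hf 1
  have hunimodular : ∑ j, f (Pi.single j 1) * b j = 1 :=
    calc ∑ j, f (Pi.single j 1) * b j = f (∑ j, b j • Pi.single j 1) := by
          simp only [map_sum, map_smul, smul_eq_mul, mul_comm]
      _ = 1 := by rw [← pi_eq_sum_univ' b, hb]
  obtain ⟨M, hM, hrow⟩ := hR n (fun j => f (Pi.single j 1)) b hunimodular
  refine ⟨M.toLinearEquiv' hM.invertible, ?_⟩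
  ext j
  simp [hrow]

variable {R K : Type*} [CommRing R] [AddCommGroup K] [Module R K] [Module.Finite R K]

theorem free_of_free_ring_prod (hR : IsHermiteRing R) [Free R (R × K)] : Free R K := by
  obtain ⟨d, ⟨e⟩⟩ : ∃ d : ℕ, Nonempty ((R × K) ≃ₗ[R] (Fin d → R)) :=
    ⟨_, ⟨((Free.chooseBasis R (R × K)).reindex (Fintype.equivFin _)).equivFun⟩⟩
  cases d with
  | zero =>
    have : Subsingleton (R × K) := e.subsingleton
    have : Subsingleton K := (Prod.mk_right_injective (0 : R)).subsingleton
    infer_instance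
  | succ n =>
    obtain ⟨φ, hφ⟩ := hR.exists_linearEquiv_proj_zero_comp_eq
      (f := .fst R R K ∘ₗ e.symm.toLinearMap) (Prod.fst_surjective.comp e.symm.surjective)
    have fst_comp : .fst R R (Fin n → R) ∘ₗ
        (e ≪≫ₗ φ ≪≫ₗ (Fin.consLinearEquiv R fun _ => R).symm).toLinearMap = .fst R R K :=
      LinearMap.ext fun x => by simpa using LinearMap.congr_fun hφ (e x)
    obtain ⟨g⟩ := nonempty_linearEquiv_of_fst_comp_eq _ fst_comp
    exact .of_equiv g.symm

theorem free_of_free_pi_prod (hR : IsHermiteRing R) (m : ℕ)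
    (h : Free R ((Fin m → R) × K)) : Free R K := by
  induction m with
  | zero => exact .of_equiv (LinearEquiv.uniqueProd (R := R) (M := K) (M₂ := Fin 0 → R))
  | succ m ih =>
    have : Free R (R × ((Fin m → R) × K)) := .of_equiv <|
      (Fin.consLinearEquiv R fun _ => R).symm.prodCongr (.refl R K) ≪≫ₗ
        .prodAssoc R R (Fin m → R) K
    exact ih hR.free_of_free_ring_prod

theorem free_of_isStablyFree (hR : IsHermiteRing R) [IsStablyFree R K] : Free R K := by
  obtain ⟨F, _, _, _, _, _⟩ := IsStablyFree.exist_free_prod R K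
  let b := (Free.chooseBasis R F).reindex (Fintype.equivFin _)
  exact hR.free_of_free_pi_prod _ <| .of_equiv <|
    .prodComm R K F ≪≫ₗ b.equivFun.prodCongr (.refl R K)

theorem exists_linearEquiv_snd_comp_eq {R E F G : Type*} [CommRing R] [Nontrivial R]
    [AddCommGroup E] [AddCommGroup F] [AddCommGroup G] [Module R E] [Module R F] [Module R G]
    [Module.Finite R E] [Module.Finite R F] [Module.Finite R G] [Free R E] [Free R F] [Free R G]
    (hR : IsHermiteRing R) {f : E →ₗ[R] F} (hf : Surjective f)
    (hrank : finrank R E = finrank R G + finrank R F) :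
    ∃ e : E ≃ₗ[R] G × F, .snd R G F ∘ₗ e.toLinearMap = f := by
  obtain ⟨s, hs⟩ := f.exists_rightInverse_of_surjective (LinearMap.range_eq_top.mpr hf)
  obtain ⟨e, -, hfe⟩ :=
    f.exact_subtype_ker_map.splitSurjectiveEquiv f.ker.subtype_injective ⟨s, hs⟩
  have : Module.Finite R f.ker :=
    .of_surjective (.fst R f.ker F ∘ₗ e.toLinearMap) (Prod.fst_surjective.comp e.surjective)
  have : Free R (f.ker × F) := .of_equiv e
  have : IsStablyFree R f.ker := .of_free_prod R f.ker F
  have : Free R f.ker := hR.free_of_isStablyFree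
  have finrank_ker : finrank R f.ker = finrank R G := by
    have finrank_eq := e.finrank_eq
    rw [finrank_prod] at finrank_eq
    omega
  let g : f.ker ≃ₗ[R] G := .ofFinrankEq _ _ finrank_ker
  exact ⟨e ≪≫ₗ g.prodCongr (.refl R F), hfe.symm⟩

end IsHermiteRing

end Cancellation

section Matrix

open Function Matrix Module

variable {R l m n : Type*} [CommRing R] [Fintype m] [Fintype n] [DecidableEq m]

theorem mul_map_eq_map_of_mul_eq_mul {F : Type*} [Field F] {φ : R →+* F} (hφ : Injective φ)
    {N : Matrix m l R} {P : Matrix m n R} {M : Matrix n l R} {Q : Matrix m m R} {G : Matrix m n F}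
    (hQN : Q * N = P * M) (hQ : Q.det ≠ 0) (hQG : Q.map φ * G = P.map φ) :
    G * M.map φ = N.map φ := by
  have hdet : (Q.map φ).det ≠ 0 := by
    rw [← RingHom.mapMatrix_apply, ← RingHom.map_det]
    exact (map_ne_zero_iff φ hφ).mpr hQ
  have := Matrix.invertibleOfIsUnitDet _ hdet.isUnit
  apply mul_right_injective_of_invertible (Q.map φ)
  calc Q.map φ * (G * M.map φ) = (P * M).map φ := by rw [← Matrix.mul_assoc, hQG, Matrix.map_mul]
    _ = Q.map φ * N.map φ := by rw [← hQN, Matrix.map_mul]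

variable [DecidableEq n]

theorem det_ne_zero_of_right_coprime [IsDomain R] {N P : Matrix m n R} {M : Matrix n n R}
    {Q : Matrix m m R} {X₁ : Matrix n m R} {X₂ : Matrix n n R}
    (hX : X₁ * N + X₂ * M = 1) (hQN : Q * N = P * M) (hQ : Q.det ≠ 0) : M.det ≠ 0 := by
  intro hM
  obtain ⟨w, hw, hMw⟩ := exists_mulVec_eq_zero_iff.mpr hM
  have hQNw : Q *ᵥ (N *ᵥ w) = 0 := by
    rw [mulVec_mulVec, hQN, ← mulVec_mulVec, hMw, mulVec_zero]
  have hNw : N *ᵥ w = 0 := eq_zero_of_mulVec_eq_zero hQ hQNw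
  apply hw
  calc w = (X₁ * N + X₂ * M) *ᵥ w := by rw [hX, one_mulVec]
    _ = X₁ *ᵥ (N *ᵥ w) + X₂ *ᵥ (M *ᵥ w) := by rw [add_mulVec, mulVec_mulVec, mulVec_mulVec]
    _ = 0 := by rw [hNw, hMw, mulVec_zero, mulVec_zero, add_zero]

namespace IsHermiteRing

theorem exists_mul_eq_zero_and_mul_eq_one [Fintype l] (hR : IsHermiteRing R)
    (hcard : Fintype.card l = Fintype.card n + Fintype.card m)
    {A : Matrix m l R} {B : Matrix l m R} (hAB : A * B = 1) :
    ∃ (C : Matrix l n R) (D : Matrix n l R), A * C = 0 ∧ D * C = 1 := by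
  classical
  rcases subsingleton_or_nontrivial R with _ | _
  · exact ⟨0, 0, Subsingleton.elim _ _, Subsingleton.elim _ _⟩
  have hA : Surjective A.toLin' := fun v =>
    ⟨B.toLin' v, by rw [← toLin'_mul_apply, hAB, toLin'_one, LinearMap.id_apply]⟩
  obtain ⟨e, he⟩ := hR.exists_linearEquiv_snd_comp_eq (G := n → R) hA
    (by simpa only [finrank_fintype_fun_eq_card] using hcard)
  let i : (n → R) →ₗ[R] (l → R) := e.symm.toLinearMap ∘ₗ .inl R (n → R) (m → R)
  let r : (l → R) →ₗ[R] (n → R) := .fst R (n → R) (m → R) ∘ₗ e.toLinearMap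
  have hAi : A.toLin' ∘ₗ i = 0 := by ext; simp [← he, i]
  have hri : r ∘ₗ i = .id := by ext; simp [r, i]
  refine ⟨i.toMatrix', r.toMatrix', ?_, ?_⟩
  · rw [← LinearMap.toMatrix'_toLin' A, ← LinearMap.toMatrix'_comp, hAi, map_zero]
  · rw [← LinearMap.toMatrix'_comp, hri, LinearMap.toMatrix'_id]

theorem exists_right_coprime (hR : IsHermiteRing R) {P : Matrix m n R} {Q : Matrix m m R}
    {Y₁ : Matrix n m R} {Y₂ : Matrix m m R} (hY : P * Y₁ + Q * Y₂ = 1) :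
    ∃ (N : Matrix m n R) (M : Matrix n n R) (X₁ : Matrix n m R) (X₂ : Matrix n n R),
      X₁ * N + X₂ * M = 1 ∧ Q * N = P * M := by
  have hright : fromCols Q (-P) * fromRows Y₂ (-Y₁) = 1 := by
    rw [fromCols_mul_fromRows, Matrix.neg_mul, Matrix.mul_neg, neg_neg, add_comm, hY]
  obtain ⟨C, D, hC, hDC⟩ := hR.exists_mul_eq_zero_and_mul_eq_one (n := n)
    (by rw [Fintype.card_sum, add_comm]) hright
  refine ⟨C.toRows₁, C.toRows₂, D.toCols₁, D.toCols₂, ?_, ?_⟩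
  · rw [← fromCols_mul_fromRows, fromCols_toCols, fromRows_toRows, hDC]
  · rw [← C.fromRows_toRows, fromCols_mul_fromRows, Matrix.neg_mul] at hC
    exact add_neg_eq_zero.mp hC

end IsHermiteRing

end Matrix

section Factorization

open Matrix

variable {R : Type*} [CommRing R] [IsDomain R] {m n : ℕ}
  {G : Matrix (Fin m) (Fin n) (FractionRing R)}

theorem HasLeftCoprimeFactorization.hasRightCoprimeFactorization (hR : IsHermiteRing R)
    (hG : HasLeftCoprimeFactorization R G) : HasRightCoprimeFactorization R G := by
  obtain ⟨P, Q, hQ, ⟨Y₁, Y₂, hY⟩, hQG⟩ := hG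
  obtain ⟨N, M, X₁, X₂, hX, hQN⟩ := hR.exists_right_coprime hY
  have hM : M.det ≠ 0 := det_ne_zero_of_right_coprime hX hQN hQ
  have hinj := IsFractionRing.injective R (FractionRing R)
  exact ⟨N, M, hM, ⟨X₁, X₂, hX⟩, mul_map_eq_map_of_mul_eq_mul hinj hQN hQ hQG⟩

theorem HasRightCoprimeFactorization.hasLeftCoprimeFactorization_transpose
    (hG : HasRightCoprimeFactorization R G) : HasLeftCoprimeFactorization R Gᵀ := by
  obtain ⟨N, M, hM, ⟨X₁, X₂, hX⟩, hGM⟩ := hG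
  refine ⟨Nᵀ, Mᵀ, by rwa [det_transpose], ⟨X₁ᵀ, X₂ᵀ, ?_⟩, ?_⟩
  · rw [← transpose_mul, ← transpose_mul, ← transpose_add, hX, transpose_one]
  · rw [transpose_map, transpose_map, ← transpose_mul, hGM]

end Factorization

/-- **Proposition 2.2** (together with its converse).  Over an Hermite ring
without zero divisors, a matrix over the field of fractions admits a left
coprime factorization if and only if it admits a right coprime
factorization. -/
theorem hermite_left_coprime_iff_right_coprime (R : Type*) [CommRing R]
    [IsDomain R] (hR : IsHermiteRing R) (m n : ℕ)
    (G : Matrix (Fin m) (Fin n) (FractionRing R)) :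
    HasLeftCoprimeFactorization R G ↔ HasRightCoprimeFactorization R G := by
  refine ⟨fun hG => hG.hasRightCoprimeFactorization hR, fun hG => ?_⟩
  have hGt := hG.hasLeftCoprimeFactorization_transpose.hasRightCoprimeFactorization hR
  simpa only [Matrix.transpose_transpose] using hGt.hasLeftCoprimeFactorization_transpose
end
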